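/- Let g be a continuous complex-valued function on the closed unit disk with ‖g‖_∞ < 8/(3π). Let f be twice continuously differentiable on 𝔻, continuous on the closed unit disk, mapping 𝔻 into itself (|f(z)| ≤ 1 on 𝔻), satisfying Δf = g on 𝔻, with f(0) = 0. If for some ζ ∈ 𝕋 one has lim_{r→1⁻} |f(rζ)| = 1, then liminf_{r→1⁻} |f(ζ) − f(rζ)|/(1−r) ≥ 2/π − 3‖g‖_∞/4. -/

import Mathlib

open Metric MeasureTheory Set Filter

noncomputable section

/-- The Wirtinger derivative `∂f/∂z = (f_x - i f_y)/2`. -/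
def wdz (f : ℂ → ℂ) (z : ℂ) : ℂ :=
  (fderiv ℝ f z 1 - Complex.I * fderiv ℝ f z Complex.I) / 2

/-- The Wirtinger derivative `∂f/∂z̄ = (f_x + i f_y)/2`. -/
def wdzbar (f : ℂ → ℂ) (z : ℂ) : ℂ :=
  (fderiv ℝ f z 1 + Complex.I * fderiv ℝ f z Complex.I) / 2

/-- The Laplacian `Δf = f_xx + f_yy` (equivalently `4 f_{z z̄}`). -/
def lap (f : ℂ → ℂ) (z : ℂ) : ℂ :=
  fderiv ℝ (fun w => fderiv ℝ f w 1) z 1 +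
    fderiv ℝ (fun w => fderiv ℝ f w Complex.I) z Complex.I

/-- The Poisson integral `P_ψ(z) = (1/2π) ∫₀^{2π} ((1-|z|²)/|1-z e^{-it}|²) ψ(e^{it}) dt`. -/
def poissonIntegral (ψ : ℂ → ℂ) (z : ℂ) : ℂ :=
  (1 / (2 * Real.pi) : ℝ) • ∫ t in (0:ℝ)..(2 * Real.pi),
    (((1 - ‖z‖ ^ 2) / ‖1 - z * Complex.exp (-(Complex.I * (t : ℂ)))‖ ^ 2 : ℝ) : ℂ) *
      ψ (Complex.exp (Complex.I * (t : ℂ)))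

/-- The Green potential `G_g(z) = (1/2π) ∫_𝔻 log|(1 - z w̄)/(z - w)| g(w) dA(w)`. -/
def greenPotential (g : ℂ → ℂ) (z : ℂ) : ℂ :=
  (1 / (2 * Real.pi) : ℝ) • ∫ w in ball (0:ℂ) 1,
    ((Real.log ‖(1 - z * (starRingEnd ℂ) w) / (z - w)‖ : ℝ) : ℂ) * g w

/-- `sup_{z ∈ 𝔻} |g(z)|`. -/
def supD (g : ℂ → ℂ) : ℝ := sSup ((fun z => ‖g z‖) '' ball (0:ℂ) 1)

/-- The function `μ(r)` with constant `c` in place of `‖g‖_∞`. -/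
def mu (c r : ℝ) : ℝ :=
  c * (1 - r ^ 2) / (8 * r ^ 2) *
    ((1 + r ^ 2) / (1 - r ^ 2) - (1 - r ^ 2) / (2 * r) * Real.log ((1 + r) / (1 - r)))

/-
Replacing `u` by the Poisson integral of its boundary values costs at most `M / 4 * (1 - ‖w‖ ^ 2)`
when `|Δ u| ≤ M`, by the maximum principle applied to `u + M / 4 * ‖·‖ ^ 2`. On the unit circle the
Poisson kernel at `w` takes the value `(1 - ‖w‖ ^ 2) / (1 + ‖w‖ ^ 2)` at the points orthogonal to
`w`, and its mean distance to that value is `4 / π * arctan ‖w‖`; this gives Pavlović's inequality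
`|P[φ] w - (1 - ‖w‖ ^ 2) / (1 + ‖w‖ ^ 2) * P[φ] 0| ≤ 4 / π * arctan ‖w‖` for `|φ| ≤ 1`. Linear
functionals carry the resulting estimate over to vector-valued `f`, and `‖f w‖` is bounded by a
function of `‖w‖` which equals `1` at `‖w‖ = 1`; its derivative there is the boundary constant.
-/

section Schwarz

open InnerProductSpace Real
open scoped Laplacian Topology

section MaximumPrinciple

variable {E F : Type*} [NormedAddCommGroup E] [NormedAddCommGroup F] [NormedSpace ℝ F]

theorem deriv_deriv_nonpos_of_isLocalMax {g : ℝ → ℝ} {t : ℝ} (hg : ContinuousAt g t)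
    (hmax : IsLocalMax g t) : deriv (deriv g) t ≤ 0 := by
  by_contra! hpos
  have hmin : IsLocalMin g t := isLocalMin_of_deriv_deriv_pos hpos hmax.deriv_eq_zero hg
  have hconst : g =ᶠ[𝓝 t] fun _ ↦ g t := by
    filter_upwards [hmax, hmin] with s hle hge using le_antisymm hle hge
  have hzero : deriv (deriv g) t = 0 := by simp [hconst.deriv.deriv_eq]
  exact hpos.ne' hzero

theorem deriv_deriv_comp_add_smul [NormedSpace ℝ E] {u : E → F} {x : E}
    (hu : ContDiffAt ℝ 2 u x) (v : E) :
    deriv (deriv fun t : ℝ ↦ u (x + t • v)) 0 = iteratedFDeriv ℝ 2 u x ![v, v] := by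
  have hline (t : ℝ) : HasDerivAt (fun t : ℝ ↦ x + t • v) v t := by
    simpa using ((hasDerivAt_id t).smul_const v).const_add x
  have hx : Tendsto (fun t : ℝ ↦ x + t • v) (𝓝 0) (𝓝 x) := by
    simpa using (hline 0).continuousAt.tendsto
  have hfirst : (deriv fun t : ℝ ↦ u (x + t • v)) =ᶠ[𝓝 0] fun t ↦ fderiv ℝ u (x + t • v) v := by
    filter_upwards [hx.eventually (hu.eventually (by simp))] with t ht
    exact ((ht.differentiableAt (by simp)).hasFDerivAt.comp_hasDerivAt t (hline t)).deriv
  have hfderiv : HasFDerivAt (fderiv ℝ u) (fderiv ℝ (fderiv ℝ u) x) (x + (0 : ℝ) • v) := by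
    simpa using ((hu.fderiv_right (m := 1) le_rfl).differentiableAt (by simp)).hasFDerivAt
  have hsecond : HasDerivAt (fun t : ℝ ↦ fderiv ℝ u (x + t • v) v)
      (fderiv ℝ (fderiv ℝ u) x v v) 0 := by
    have happly := (ContinuousLinearMap.apply ℝ F v).hasFDerivAt.comp _ hfderiv
    exact happly.comp_hasDerivAt (f := fun t : ℝ ↦ x + t • v) 0 (hline 0)
  rw [hfirst.deriv_eq, hsecond.deriv, iteratedFDeriv_two_apply]
  rfl

variable [InnerProductSpace ℝ E] [FiniteDimensional ℝ E]

theorem laplacian_nonpos_of_isLocalMax {u : E → ℝ} {x : E} (hu : ContDiffAt ℝ 2 u x)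
    (hmax : IsLocalMax u x) : Δ u x ≤ 0 := by
  rw [laplacian_eq_iteratedFDeriv_stdOrthonormalBasis]
  refine Finset.sum_nonpos fun i _ ↦ ?_
  rw [← deriv_deriv_comp_add_smul hu]
  have hline : ContinuousAt (fun t : ℝ ↦ x + t • stdOrthonormalBasis ℝ E i) 0 := by fun_prop
  have hmax₀ : IsLocalMax u (x + (0 : ℝ) • stdOrthonormalBasis ℝ E i) := by simpa using hmax
  exact deriv_deriv_nonpos_of_isLocalMax (.comp (by simpa using hu.continuousAt) hline)
    (hline.eventually hmax₀)

theorem laplacian_norm_sq (x : E) :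
    Δ (fun y : E ↦ ‖y‖ ^ 2) x = 2 * Module.finrank ℝ E := by
  have hsecond (v : E) : iteratedFDeriv ℝ 2 (fun y : E ↦ ‖y‖ ^ 2) x ![v, v] = 2 * ‖v‖ ^ 2 := by
    have hfderiv : fderiv ℝ (fun y : E ↦ ‖y‖ ^ 2) = ⇑(2 • innerSL ℝ : E →L[ℝ] E →L[ℝ] ℝ) := by
      ext1 y
      simp
    rw [iteratedFDeriv_two_apply, hfderiv, ContinuousLinearMap.fderiv]
    change 2 • inner ℝ v v = 2 * ‖v‖ ^ 2
    simp
  simp [laplacian_eq_iteratedFDeriv_stdOrthonormalBasis, hsecond, mul_comm]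

theorem laplacian_add_const_mul_norm_sq {u : E → ℝ} {x : E} (hu : ContDiffAt ℝ 2 u x) (δ : ℝ) :
    Δ (fun y ↦ u y + δ * ‖y‖ ^ 2) x = Δ u x + 2 * Module.finrank ℝ E * δ := by
  have hsq : ContDiffAt ℝ 2 (fun y : E ↦ ‖y‖ ^ 2) x := (contDiff_norm_sq ℝ).contDiffAt
  have hδsq : ContDiffAt ℝ 2 (δ • fun y : E ↦ ‖y‖ ^ 2) x := hsq.const_smul δ
  have hsum : (fun y ↦ u y + δ * ‖y‖ ^ 2) = u + δ • fun y : E ↦ ‖y‖ ^ 2 := rfl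
  rw [hsum, hu.laplacian_add hδsq, laplacian_smul δ hsq, laplacian_norm_sq, smul_eq_mul, mul_comm]

theorem le_of_laplacian_nonneg_of_le_frontier [Nontrivial E] {U : Set E} {u : E → ℝ} {C : ℝ}
    (hU : IsOpen U) (hUb : Bornology.IsBounded U) (hu : ContDiffOn ℝ 2 u U)
    (huc : ContinuousOn u (closure U)) (hΔ : ∀ x ∈ U, 0 ≤ Δ u x)
    (hC : ∀ x ∈ frontier U, u x ≤ C) {x : E} (hx : x ∈ U) : u x ≤ C := by
  obtain ⟨R, hR⟩ := hUb.closure.exists_norm_le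
  -- Adding `δ ‖·‖²` makes the Laplacian positive, which excludes interior maxima.
  have hperturbed (δ : ℝ) (hδ : 0 < δ) : u x ≤ C + δ * R ^ 2 := by
    have hvc : ContinuousOn (fun y ↦ u y + δ * ‖y‖ ^ 2) (closure U) := huc.add (by fun_prop)
    obtain ⟨y, hy, hmax⟩ := hUb.isCompact_closure.exists_isMaxOn ⟨x, subset_closure hx⟩ hvc
    have hyU : y ∉ U := fun hyU ↦ by
      have hu_y : ContDiffAt ℝ 2 u y := hu.contDiffAt (hU.mem_nhds hyU)
      have hle : Δ (fun y ↦ u y + δ * ‖y‖ ^ 2) y ≤ 0 :=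
        laplacian_nonpos_of_isLocalMax
          (hu_y.add (contDiffAt_const.mul (contDiff_norm_sq ℝ).contDiffAt))
          (hmax.isLocalMax (mem_of_superset (hU.mem_nhds hyU) subset_closure))
      rw [laplacian_add_const_mul_norm_sq hu_y] at hle
      have hdim : (0 : ℝ) < Module.finrank ℝ E := mod_cast Module.finrank_pos
      have hpos : 0 < 2 * Module.finrank ℝ E * δ := by positivity
      linarith [hΔ y hyU]
    calc u x ≤ u x + δ * ‖x‖ ^ 2 := by simpa using by positivity
      _ ≤ u y + δ * ‖y‖ ^ 2 := hmax (subset_closure hx)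
      _ ≤ C + δ * R ^ 2 := by
        gcongr
        exacts [hC y (hU.frontier_eq ▸ ⟨hy, hyU⟩), hR y hy]
  have hlim : Tendsto (fun δ : ℝ ↦ C + δ * R ^ 2) (𝓝[>] 0) (𝓝 C) :=
    tendsto_nhdsWithin_of_tendsto_nhds (Continuous.tendsto' (by fun_prop) _ _ (by simp))
  exact ge_of_tendsto hlim (eventually_mem_nhdsWithin.mono hperturbed)

end MaximumPrinciple

theorem exists_harmonicOnNhd_of_mem_span_fourier {T : ℝ} {p : C(AddCircle T, ℂ)}
    (hp : p ∈ Submodule.span ℂ (range (@fourier T))) (c : ℂ) {R : ℝ} (hR : R ≠ 0) :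
    ∃ h : ℂ → ℂ, HarmonicOnNhd h univ ∧ ∀ t : AddCircle T, h (c + R * t.toCircle) = p t := by
  induction hp using Submodule.span_induction with
  | mem x hx =>
    obtain ⟨n, rfl⟩ := hx
    obtain ⟨m, rfl | rfl⟩ := n.eq_nat_or_neg
    · refine ⟨fun z ↦ ((z - c) / R) ^ m, fun z _ ↦ ?_, fun t ↦ ?_⟩
      · exact AnalyticAt.harmonicAt (by fun_prop)
      · simp [hR, fourier_apply, AddCircle.toCircle_nsmul]
    · refine ⟨fun z ↦ starRingEnd ℂ (((z - c) / R) ^ m), fun z _ ↦ ?_, fun t ↦ ?_⟩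
      · exact AnalyticAt.harmonicAt_conj (f := fun z ↦ ((z - c) / R) ^ m) (by fun_prop)
      · rw [fourier_neg]
        simp [hR, fourier_apply, AddCircle.toCircle_nsmul]
  | zero => exact ⟨0, fun _ _ ↦ harmonicAt_const 0, fun _ ↦ rfl⟩
  | add x y _ _ hx hy =>
    obtain ⟨h, hh, hx⟩ := hx
    obtain ⟨k, hk, hy⟩ := hy
    exact ⟨h + k, hh.add hk, fun t ↦ by simp [hx, hy]⟩
  | smul a x _ hx =>
    obtain ⟨h, hh, hx⟩ := hx
    exact ⟨fun z ↦ a • h z, hh.comp_CLM (ContinuousLinearMap.lsmul ℝ ℂ a), fun t ↦ by simp [hx]⟩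

theorem exists_harmonicOnNhd_abs_sub_lt {φ : ℂ → ℝ} {c : ℂ} {R : ℝ} (hR : 0 < R)
    (hφ : ContinuousOn φ (sphere c R)) {ε : ℝ} (hε : 0 < ε) :
    ∃ h : ℂ → ℝ, HarmonicOnNhd h univ ∧ ∀ z ∈ sphere c R, |φ z - h z| < ε := by
  have : Fact (0 < 2 * π) := ⟨two_pi_pos⟩
  have hcircle (t : AddCircle (2 * π)) : c + R * (t.toCircle : ℂ) ∈ sphere c R := by
    simp [abs_of_pos hR, Circle.norm_coe]
  let Φ : C(AddCircle (2 * π), ℂ) :=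
    ⟨fun t ↦ φ (c + R * t.toCircle), Complex.continuous_ofReal.comp
      (hφ.comp_continuous (by fun_prop) hcircle)⟩
  have hΦ : Φ ∈ (Submodule.span ℂ (range (@fourier (2 * π)))).topologicalClosure := by
    simp [span_fourier_closure_eq_top]
  obtain ⟨p, hp, hΦp⟩ := Metric.mem_closure_iff.1 hΦ ε hε
  obtain ⟨h, hh, hhp⟩ := exists_harmonicOnNhd_of_mem_span_fourier hp c hR.ne'
  refine ⟨fun z ↦ (h z).re, hh.comp_CLM Complex.reCLM, fun z hz ↦ ?_⟩
  obtain ⟨t, rfl⟩ : ∃ t : AddCircle (2 * π), c + R * (t.toCircle : ℂ) = z := by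
    refine ⟨(Complex.arg (z - c) : ℝ), ?_⟩
    rw [AddCircle.toCircle_apply_mk, ← mem_sphere_iff_norm.1 hz]
    simp [Complex.norm_mul_exp_arg_mul_I]
  calc |φ (c + R * t.toCircle) - (h (c + R * t.toCircle)).re| = |(Φ t - p t).re| := by
        simp [Φ, hhp]
    _ ≤ dist (Φ t) (p t) := dist_eq_norm (Φ t) (p t) ▸ Complex.abs_re_le_norm _
    _ ≤ dist Φ p := ContinuousMap.dist_apply_le_dist t
    _ < ε := hΦp

section PoissonKernel

variable {c w : ℂ} {R : ℝ}

theorem continuousOn_poissonKernel_sphere (hw : w ∈ ball c R) :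
    ContinuousOn (poissonKernel c w) (sphere c |R|) := by
  rw [poissonKernel_eq_re_herglotzRieszKernel]
  exact Complex.continuous_re.comp_continuousOn (continuousOn_herglotzRieszKernel_sphere hw)

theorem poissonKernel_nonneg {z : ℂ} (hw : w ∈ ball c R) (hz : z ∈ sphere c |R|) :
    0 ≤ poissonKernel c w z := by
  have hwz : ‖w - c‖ ≤ ‖z - c‖ := by
    rw [mem_sphere_iff_norm.1 hz]
    exact (mem_ball_iff_norm.1 hw).le.trans (le_abs_self R)
  rw [poissonKernel_def]
  have := sub_nonneg.2 (pow_le_pow_left₀ (norm_nonneg _) hwz 2)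
  positivity

theorem circleIntegrable_poissonKernel_smul (hw : w ∈ ball c R) {φ : ℂ → ℝ}
    (hφ : ContinuousOn φ (sphere c |R|)) : CircleIntegrable (poissonKernel c w • φ) c R :=
  ((continuousOn_poissonKernel_sphere hw).smul hφ).circleIntegrable'

theorem circleAverage_poissonKernel (hw : w ∈ ball c R) :
    circleAverage (poissonKernel c w) c R = 1 := by
  have hone : poissonKernel c w • (fun _ ↦ (1 : ℝ)) = poissonKernel c w := by
    ext z
    simp
  rw [← hone, (harmonicOnNhd_const (1 : ℝ)).circleAverage_poissonKernel_smul hw]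

theorem circleAverage_poissonKernel_smul_add_const (hw : w ∈ ball c R) {φ : ℂ → ℝ}
    (hφ : ContinuousOn φ (sphere c |R|)) (C : ℝ) :
    circleAverage (poissonKernel c w • fun z ↦ φ z + C) c R =
      circleAverage (poissonKernel c w • φ) c R + C := by
  have hsplit : (poissonKernel c w • fun z ↦ φ z + C) =
      poissonKernel c w • φ + C • poissonKernel c w := by
    ext z
    simp only [Pi.mul_apply, Pi.add_apply, Pi.smul_apply, smul_eq_mul]
    ring
  rw [hsplit, circleAverage_add (circleIntegrable_poissonKernel_smul hw hφ)
    ((continuousOn_poissonKernel_sphere hw).const_smul C).circleIntegrable', circleAverage_smul,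
    circleAverage_poissonKernel hw, smul_eq_mul C, mul_one]

theorem circleAverage_poissonKernel_smul_mono (hw : w ∈ ball c R) {φ ψ : ℂ → ℝ}
    (hφ : ContinuousOn φ (sphere c |R|)) (hψ : ContinuousOn ψ (sphere c |R|))
    (hφψ : ∀ z ∈ sphere c |R|, φ z ≤ ψ z) :
    circleAverage (poissonKernel c w • φ) c R ≤ circleAverage (poissonKernel c w • ψ) c R :=
  circleAverage_mono (circleIntegrable_poissonKernel_smul hw hφ)
    (circleIntegrable_poissonKernel_smul hw hψ) fun z hz ↦
      mul_le_mul_of_nonneg_left (hφψ z hz) (poissonKernel_nonneg hw hz)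

theorem le_circleAverage_poissonKernel_smul {u : ℂ → ℝ} (hu : ContDiffOn ℝ 2 u (ball c R))
    (huc : ContinuousOn u (closedBall c R)) (hΔ : ∀ z ∈ ball c R, 0 ≤ Δ u z)
    (hw : w ∈ ball c R) : u w ≤ circleAverage (poissonKernel c w • u) c R := by
  have hR : 0 < R := pos_of_mem_ball hw
  have hus : ContinuousOn u (sphere c R) := huc.mono sphere_subset_closedBall
  refine le_of_forall_pos_le_add fun ε hε ↦ ?_
  obtain ⟨h, hh, huh⟩ := exists_harmonicOnNhd_abs_sub_lt hR hus (half_pos hε)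
  have hhc : Continuous h := continuousOn_univ.1 hh.continuousOn
  have hmax : u w - h w ≤ ε / 2 := by
    refine le_of_laplacian_nonneg_of_le_frontier (u := u - h) isOpen_ball isBounded_ball
      (hu.sub (hh.contDiffOn.mono (subset_univ _))) ?_ (fun z hz ↦ ?_) (fun z hz ↦ ?_) hw
    · exact closure_ball c hR.ne' ▸ huc.sub hhc.continuousOn
    · rw [(hu.contDiffAt (isOpen_ball.mem_nhds hz)).laplacian_sub (hh z (mem_univ z)).1,
        (hh z (mem_univ z)).2.eq_of_nhds]
      simpa using hΔ z hz
    · rw [frontier_ball c hR.ne'] at hz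
      exact ((le_abs_self _).trans_lt (huh z hz)).le
  rw [← abs_of_pos hR] at hus huh
  calc u w ≤ h w + ε / 2 := by linarith
    _ = circleAverage (poissonKernel c w • h) c R + ε / 2 := by
      rw [(hh.mono (subset_univ _)).circleAverage_poissonKernel_smul hw]
    _ ≤ circleAverage (poissonKernel c w • fun z ↦ u z + ε / 2) c R + ε / 2 := by
      gcongr ?_ + ε / 2
      refine circleAverage_poissonKernel_smul_mono hw hhc.continuousOn (ψ := fun z ↦ u z + ε / 2)
        (by fun_prop) fun z hz ↦ ?_
      linarith [(abs_lt.1 (huh z hz)).1]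
    _ = circleAverage (poissonKernel c w • u) c R + ε := by
      rw [circleAverage_poissonKernel_smul_add_const hw hus, add_assoc, add_halves]

end PoissonKernel

-- Starting the circle at a point orthogonal to `w`, the sign of `sin θ` tells on which side of its
-- value there the kernel lies.
theorem poissonKernel_circleMap_add_arg_sub_pi_div_two (w : ℂ) (θ : ℝ) :
    poissonKernel 0 w (circleMap 0 1 (θ + (w.arg - π / 2))) =
      (1 - ‖w‖ ^ 2) / (1 - 2 * ‖w‖ * sin θ + ‖w‖ ^ 2) := by
  have hcircle : circleMap 0 1 (θ + (w.arg - π / 2)) =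
      Complex.exp (w.arg * Complex.I) * ⟨sin θ, -cos θ⟩ := by
    have hpolar : (⟨sin θ, -cos θ⟩ : ℂ) = Complex.exp ((θ - π / 2 : ℝ) * Complex.I) := by
      apply Complex.ext <;>
        simp [Complex.exp_ofReal_mul_I_re, Complex.exp_ofReal_mul_I_im, -Complex.ofReal_sub,
          cos_sub_pi_div_two, sin_sub_pi_div_two]
    rw [hpolar, ← Complex.exp_add, circleMap_zero, Complex.ofReal_one, one_mul]
    congr 1
    push_cast
    ring
  have hden : ‖circleMap 0 1 (θ + (w.arg - π / 2)) - w‖ ^ 2 =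
      1 - 2 * ‖w‖ * sin θ + ‖w‖ ^ 2 := by
    nth_rw 2 [← Complex.norm_mul_exp_arg_mul_I w]
    rw [hcircle, mul_comm (‖w‖ : ℂ), ← mul_sub, norm_mul, Complex.norm_exp_ofReal_mul_I, one_mul,
      Complex.sq_norm, Complex.normSq_apply]
    simp only [Complex.sub_re, Complex.ofReal_re, Complex.sub_im, Complex.ofReal_im]
    linear_combination sin_sq_add_cos_sq θ
  simp [poissonKernel_def, hden]

theorem one_sub_two_mul_mul_sin_add_sq_pos {r : ℝ} (hr : |r| < 1) (θ : ℝ) :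
    0 < 1 - 2 * r * sin θ + r ^ 2 := by
  have hsin : r * sin θ ≤ |r| :=
    (le_abs_self _).trans (abs_mul r _ ▸ mul_le_of_le_one_right (abs_nonneg r) (abs_sin_le_one θ))
  nlinarith [sq_pos_of_pos (sub_pos.2 hr), sq_abs r]

theorem one_add_two_mul_mul_sin_add_sq_pos {r : ℝ} (hr : |r| < 1) (θ : ℝ) :
    0 < 1 + 2 * r * sin θ + r ^ 2 := by
  simpa using one_sub_two_mul_mul_sin_add_sq_pos hr (-θ)

theorem hasDerivAt_neg_two_mul_arctan_mul_cos {r : ℝ} (hr : |r| < 1) (θ : ℝ) :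
    HasDerivAt (fun θ ↦ -2 * arctan (2 * r / (1 - r ^ 2) * cos θ))
      ((1 - r ^ 2) / (1 - 2 * r * sin θ + r ^ 2) -
        (1 - r ^ 2) / (1 + 2 * r * sin θ + r ^ 2)) θ := by
  have hr₂ : 0 < 1 - r ^ 2 := sub_pos.2 ((sq_lt_one_iff_abs_lt_one r).2 hr)
  convert! (((hasDerivAt_cos θ).const_mul (2 * r / (1 - r ^ 2))).arctan.const_mul (-2)) using 1
  have hm := (one_sub_two_mul_mul_sin_add_sq_pos hr θ).ne'
  have hp := (one_add_two_mul_mul_sin_add_sq_pos hr θ).ne'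
  have hprod : (1 - r ^ 2) ^ 2 + (2 * r * cos θ) ^ 2 =
      (1 - 2 * r * sin θ + r ^ 2) * (1 + 2 * r * sin θ + r ^ 2) := by
    linear_combination 4 * r ^ 2 * sin_sq_add_cos_sq θ
  have hsq : 1 + (2 * r / (1 - r ^ 2) * cos θ) ^ 2 =
      (1 - 2 * r * sin θ + r ^ 2) * (1 + 2 * r * sin θ + r ^ 2) / (1 - r ^ 2) ^ 2 := by
    rw [← hprod]
    field_simp
  have hdiff : 2 * (2 * r * sin θ) =
      (1 + 2 * r * sin θ + r ^ 2) - (1 - 2 * r * sin θ + r ^ 2) := by ring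
  rw [hsq]
  generalize 1 - 2 * r * sin θ + r ^ 2 = m, 1 + 2 * r * sin θ + r ^ 2 = p at hm hp hdiff
  field_simp
  linear_combination -hdiff

theorem integral_div_sub_div_eq_eight_mul_arctan {r : ℝ} (hr : |r| < 1) :
    ∫ θ in 0..π, ((1 - r ^ 2) / (1 - 2 * r * sin θ + r ^ 2) -
      (1 - r ^ 2) / (1 + 2 * r * sin θ + r ^ 2)) = 8 * arctan r := by
  have hminus (θ : ℝ) : 1 - 2 * r * sin θ + r ^ 2 ≠ 0 :=
    (one_sub_two_mul_mul_sin_add_sq_pos hr θ).ne'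
  have hplus (θ : ℝ) : 1 + 2 * r * sin θ + r ^ 2 ≠ 0 :=
    (one_add_two_mul_mul_sin_add_sq_pos hr θ).ne'
  have hcont : Continuous fun θ ↦ (1 - r ^ 2) / (1 - 2 * r * sin θ + r ^ 2) -
      (1 - r ^ 2) / (1 + 2 * r * sin θ + r ^ 2) :=
    .sub (.div (by fun_prop) (by fun_prop) hminus) (.div (by fun_prop) (by fun_prop) hplus)
  rw [intervalIntegral.integral_eq_sub_of_hasDerivAt
    (fun θ _ ↦ hasDerivAt_neg_two_mul_arctan_mul_cos hr θ) (hcont.intervalIntegrable _ _)]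
  have hdouble := two_mul_arctan (abs_lt.1 hr).1 (abs_lt.1 hr).2
  simp only [cos_pi, cos_zero, mul_neg, mul_one, arctan_neg, ← hdouble]
  ring

theorem integral_abs_div_sub_eq_eight_mul_arctan {r : ℝ} (hr₀ : 0 ≤ r) (hr₁ : r < 1) :
    ∫ θ in 0..2 * π, |(1 - r ^ 2) / (1 - 2 * r * sin θ + r ^ 2) - (1 - r ^ 2) / (1 + r ^ 2)| =
      8 * arctan r := by
  set F : ℝ → ℝ := fun θ ↦
    |(1 - r ^ 2) / (1 - 2 * r * sin θ + r ^ 2) - (1 - r ^ 2) / (1 + r ^ 2)| with hF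
  have hr : |r| < 1 := by rwa [abs_of_nonneg hr₀]
  have hr₂ : 0 ≤ 1 - r ^ 2 := by nlinarith
  have hden (θ : ℝ) : 0 < 1 - 2 * r * sin θ + r ^ 2 :=
    one_sub_two_mul_mul_sin_add_sq_pos hr θ
  have hFc : Continuous F :=
    ((continuous_const.div (by fun_prop) fun θ ↦ (hden θ).ne').sub continuous_const).abs
  have hpair : EqOn (fun θ ↦ F θ + F (θ + π)) (fun θ ↦ (1 - r ^ 2) / (1 - 2 * r * sin θ + r ^ 2) -
      (1 - r ^ 2) / (1 + 2 * r * sin θ + r ^ 2)) (uIcc 0 π) := fun θ hθ ↦ by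
    rw [uIcc_of_le pi_nonneg] at hθ
    have hs : 0 ≤ 2 * r * sin θ := mul_nonneg (by positivity) (sin_nonneg_of_mem_Icc hθ)
    have hge : (1 - r ^ 2) / (1 + r ^ 2) ≤ (1 - r ^ 2) / (1 - 2 * r * sin θ + r ^ 2) :=
      div_le_div_of_nonneg_left hr₂ (hden θ) (by linarith)
    have hle : (1 - r ^ 2) / (1 + 2 * r * sin θ + r ^ 2) ≤ (1 - r ^ 2) / (1 + r ^ 2) :=
      div_le_div_of_nonneg_left hr₂ (by positivity) (by linarith)
    simp only [hF, sin_add_pi, mul_neg, sub_neg_eq_add]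
    rw [abs_of_nonneg (sub_nonneg.2 hge), abs_of_nonpos (sub_nonpos.2 hle)]
    ring
  calc ∫ θ in 0..2 * π, F θ = (∫ θ in 0..π, F θ) + ∫ θ in π..2 * π, F θ :=
        (intervalIntegral.integral_add_adjacent_intervals (hFc.intervalIntegrable _ _)
          (hFc.intervalIntegrable _ _)).symm
    _ = (∫ θ in 0..π, F θ) + ∫ θ in 0..π, F (θ + π) := by
      rw [intervalIntegral.integral_comp_add_right, zero_add, ← two_mul]
    _ = ∫ θ in 0..π, (F θ + F (θ + π)) :=
      (intervalIntegral.integral_add (hFc.intervalIntegrable _ _)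
        ((hFc.comp (continuous_add_const π)).intervalIntegrable _ _)).symm
    _ = 8 * arctan r := by
      rw [intervalIntegral.integral_congr hpair, integral_div_sub_div_eq_eight_mul_arctan hr]

theorem circleAverage_abs_poissonKernel_sub {w : ℂ} (hw : w ∈ ball (0 : ℂ) 1) :
    circleAverage (fun z ↦ |poissonKernel 0 w z - (1 - ‖w‖ ^ 2) / (1 + ‖w‖ ^ 2)|) 0 1 =
      4 / π * arctan ‖w‖ := by
  rw [circleAverage_eq_integral_add (w.arg - π / 2)]
  simp only [poissonKernel_circleMap_add_arg_sub_pi_div_two]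
  rw [integral_abs_div_sub_eq_eight_mul_arctan (norm_nonneg w) (mem_ball_zero_iff.1 hw),
    smul_eq_mul]
  ring

theorem abs_circleAverage_poissonKernel_smul_sub_le {φ : ℂ → ℝ} {w : ℂ}
    (hφ : ContinuousOn φ (sphere 0 1)) (hφ₁ : ∀ z ∈ sphere (0 : ℂ) 1, |φ z| ≤ 1)
    (hw : w ∈ ball (0 : ℂ) 1) :
    |circleAverage (poissonKernel 0 w • φ) 0 1 -
      (1 - ‖w‖ ^ 2) / (1 + ‖w‖ ^ 2) * circleAverage φ 0 1| ≤ 4 / π * arctan ‖w‖ := by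
  set a := (1 - ‖w‖ ^ 2) / (1 + ‖w‖ ^ 2) with ha
  rw [← abs_one (α := ℝ)] at hφ
  have hP : ContinuousOn (fun z ↦ poissonKernel 0 w z - a) (sphere 0 |1|) :=
    (continuousOn_poissonKernel_sphere hw).sub continuousOn_const
  have hPφ : ContinuousOn (fun z ↦ (poissonKernel 0 w z - a) * φ z) (sphere 0 |1|) := hP.mul hφ
  have hsplit : circleAverage (poissonKernel 0 w • φ) 0 1 - a * circleAverage φ 0 1 =
      circleAverage (fun z ↦ (poissonKernel 0 w z - a) * φ z) 0 1 := by
    rw [← smul_eq_mul a, ← circleAverage_smul, ← circleAverage_sub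
      (circleIntegrable_poissonKernel_smul hw hφ) (hφ.const_smul a).circleIntegrable']
    congr 1
    ext z
    simp [sub_mul]
  calc |circleAverage (poissonKernel 0 w • φ) 0 1 - a * circleAverage φ 0 1|
    _ ≤ circleAverage (fun z ↦ |(poissonKernel 0 w z - a) * φ z|) 0 1 := by
      rw [hsplit]
      exact abs_circleAverage_le_circleAverage_abs
    _ ≤ circleAverage (fun z ↦ |poissonKernel 0 w z - a|) 0 1 := by
      refine circleAverage_mono hPφ.abs.circleIntegrable' hP.abs.circleIntegrable' fun z hz ↦ ?_
      rw [abs_mul]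
      exact mul_le_of_le_one_right (abs_nonneg _) (hφ₁ z (by simpa using hz))
    _ = 4 / π * arctan ‖w‖ := circleAverage_abs_poissonKernel_sub hw

theorem le_circleAverage_poissonKernel_smul_add {u : ℂ → ℝ} {R M : ℝ} {w : ℂ}
    (hu : ContDiffOn ℝ 2 u (ball 0 R)) (huc : ContinuousOn u (closedBall 0 R))
    (hΔ : ∀ z ∈ ball (0 : ℂ) R, -M ≤ Δ u z) (hw : w ∈ ball 0 R) :
    u w ≤ circleAverage (poissonKernel 0 w • u) 0 R + M / 4 * (R ^ 2 - ‖w‖ ^ 2) := by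
  have hsub : u w + M / 4 * ‖w‖ ^ 2 ≤
      circleAverage (poissonKernel 0 w • fun z ↦ u z + M / 4 * ‖z‖ ^ 2) 0 R := by
    refine le_circleAverage_poissonKernel_smul (u := fun z ↦ u z + M / 4 * ‖z‖ ^ 2)
      (hu.add (contDiffOn_const.mul (contDiff_norm_sq ℝ).contDiffOn))
      (huc.add (by fun_prop)) (fun z hz ↦ ?_) hw
    rw [laplacian_add_const_mul_norm_sq (hu.contDiffAt (isOpen_ball.mem_nhds hz)),
      Complex.finrank_real_complex]
    push_cast
    linarith [hΔ z hz]
  have hR : |R| = R := abs_of_pos (pos_of_mem_ball hw)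
  have hsphere : circleAverage (poissonKernel 0 w • fun z ↦ u z + M / 4 * ‖z‖ ^ 2) 0 R =
      circleAverage (poissonKernel 0 w • u) 0 R + M / 4 * R ^ 2 := by
    rw [← circleAverage_poissonKernel_smul_add_const hw
      (huc.mono (hR.symm ▸ sphere_subset_closedBall))]
    refine circleAverage_congr_sphere fun z hz ↦ ?_
    rw [mem_sphere_zero_iff_norm, hR] at hz
    simp [hz]
  linarith

theorem sub_mul_le_of_abs_laplacian_le {u : ℂ → ℝ} {M : ℝ} {w : ℂ}
    (hu : ContDiffOn ℝ 2 u (ball 0 1)) (huc : ContinuousOn u (closedBall 0 1))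
    (hu₁ : ∀ z ∈ sphere (0 : ℂ) 1, |u z| ≤ 1) (hΔ : ∀ z ∈ ball (0 : ℂ) 1, |Δ u z| ≤ M)
    (hw : w ∈ ball (0 : ℂ) 1) :
    u w - (1 - ‖w‖ ^ 2) / (1 + ‖w‖ ^ 2) * u 0 ≤ 4 / π * arctan ‖w‖ +
      M / 4 * ((1 - ‖w‖ ^ 2) + (1 - ‖w‖ ^ 2) / (1 + ‖w‖ ^ 2)) := by
  have hw₁ : ‖w‖ ^ 2 ≤ 1 := pow_le_one₀ (norm_nonneg w) (mem_ball_zero_iff.1 hw).le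
  have hfactor : 0 ≤ (1 - ‖w‖ ^ 2) / (1 + ‖w‖ ^ 2) :=
    div_nonneg (sub_nonneg.2 hw₁) (by positivity)
  have hupper := le_circleAverage_poissonKernel_smul_add hu huc
    (fun z hz ↦ (abs_le.1 (hΔ z hz)).1) hw
  have hlower : circleAverage u 0 1 ≤ u 0 + M / 4 := by
    have hneg := le_circleAverage_poissonKernel_smul_add (u := -u) (M := M) hu.neg huc.neg
      (fun z hz ↦ by simpa [laplacian_neg] using (abs_le.1 (hΔ z hz)).2) (mem_ball_self one_pos)
    have hmean : circleAverage (poissonKernel 0 0 • -u) 0 1 = -circleAverage u 0 1 := by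
      rw [← neg_one_smul ℝ (circleAverage u 0 1), ← circleAverage_smul]
      refine circleAverage_congr_sphere fun z hz ↦ ?_
      rw [mem_sphere_zero_iff_norm, abs_one] at hz
      simp [poissonKernel_def, hz]
    simp only [hmean, Pi.neg_apply, norm_zero] at hneg
    linarith
  have hmiddle := (abs_le.1 (abs_circleAverage_poissonKernel_smul_sub_le
    (huc.mono sphere_subset_closedBall) hu₁ hw)).2
  nlinarith [mul_le_mul_of_nonneg_left hlower hfactor]

theorem norm_sub_smul_le_of_norm_laplacian_le {E : Type*} [NormedAddCommGroup E] [NormedSpace ℝ E]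
    {f : ℂ → E} {M : ℝ} {w : ℂ}
    (hf : ContDiffOn ℝ 2 f (ball 0 1)) (hfc : ContinuousOn f (closedBall 0 1))
    (hf₁ : ∀ z ∈ sphere (0 : ℂ) 1, ‖f z‖ ≤ 1) (hΔ : ∀ z ∈ ball (0 : ℂ) 1, ‖Δ f z‖ ≤ M)
    (hw : w ∈ ball (0 : ℂ) 1) :
    ‖f w - ((1 - ‖w‖ ^ 2) / (1 + ‖w‖ ^ 2)) • f 0‖ ≤ 4 / π * arctan ‖w‖ +
      M / 4 * ((1 - ‖w‖ ^ 2) + (1 - ‖w‖ ^ 2) / (1 + ‖w‖ ^ 2)) := by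
  obtain ⟨ℓ, hℓ, hℓw⟩ :=
    exists_dual_vector'' ℝ (f w - ((1 - ‖w‖ ^ 2) / (1 + ‖w‖ ^ 2)) • f 0)
  have hbound (x : E) : |ℓ x| ≤ ‖x‖ := ℓ.le_of_opNorm_le_of_le hℓ le_rfl |>.trans_eq (one_mul _)
  have hreal := sub_mul_le_of_abs_laplacian_le (u := ℓ ∘ f) (M := M)
    (ℓ.contDiff.comp_contDiffOn hf) (ℓ.continuous.comp_continuousOn hfc)
    (fun z hz ↦ (hbound _).trans (hf₁ z hz)) (fun z hz ↦ ?_) hw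
  · rw [ℓ.map_sub, ℓ.map_smul, smul_eq_mul] at hℓw
    exact hℓw.symm.trans_le hreal
  · rw [(hf.contDiffAt (isOpen_ball.mem_nhds hz)).laplacian_CLM_comp_left]
    exact (hbound _).trans (hΔ z hz)

theorem lap_eq_laplacian {f : ℂ → ℂ} {z : ℂ} (hf : ContDiffAt ℝ 2 f z) : lap f z = Δ f z := by
  have hdiff : DifferentiableAt ℝ (fderiv ℝ f) z :=
    (hf.fderiv_right (m := 1) le_rfl).differentiableAt (by simp)
  have happly (v : ℂ) : fderiv ℝ (fun w ↦ fderiv ℝ f w v) z v = fderiv ℝ (fderiv ℝ f) z v v := by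
    simp [fderiv_clm_apply hdiff (differentiableAt_const v)]
  simp [lap, happly, laplacian_eq_iteratedFDeriv_complexPlane, iteratedFDeriv_two_apply]

theorem norm_le_supD {g : ℂ → ℂ} (hg : ContinuousOn g (closedBall 0 1)) {z : ℂ}
    (hz : z ∈ ball (0 : ℂ) 1) : ‖g z‖ ≤ supD g :=
  le_csSup (((isCompact_closedBall 0 1).bddAbove_image hg.norm).mono
    (image_mono ball_subset_closedBall)) (mem_image_of_mem _ hz)

theorem norm_laplacian_le_supD {f g : ℂ → ℂ} (hg : ContinuousOn g (closedBall 0 1))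
    (hf : ContDiffOn ℝ 2 f (ball 0 1)) (hfg : ∀ z ∈ ball (0 : ℂ) 1, lap f z = g z) {z : ℂ}
    (hz : z ∈ ball (0 : ℂ) 1) : ‖Δ f z‖ ≤ supD g := by
  rw [← lap_eq_laplacian (hf.contDiffAt (isOpen_ball.mem_nhds hz)), hfg z hz]
  exact norm_le_supD hg hz

theorem coe_le_liminf_div_sub_of_hasDerivWithinAt {B F : ℝ → ℝ} {m x : ℝ}
    (hB : HasDerivWithinAt B m (Iio x) x) (hF : ∀ᶠ r in 𝓝[<] x, B x - B r ≤ F r) :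
    (m : EReal) ≤ liminf (fun r ↦ ((F r / (x - r) : ℝ) : EReal)) (𝓝[<] x) := by
  have hslope : Tendsto (fun r ↦ ((slope B x r : ℝ) : EReal)) (𝓝[<] x) (𝓝 m) :=
    (continuous_coe_real_ereal.tendsto m).comp
      ((hasDerivWithinAt_iff_tendsto_slope' self_notMem_Iio).1 hB)
  rw [← hslope.liminf_eq]
  refine liminf_le_liminf ?_
  filter_upwards [hF, self_mem_nhdsWithin] with r hr hrx
  rw [EReal.coe_le_coe_iff, slope_comm, slope_def_field]
  exact div_le_div_of_nonneg_right hr (sub_nonneg.2 (le_of_lt hrx))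

/-- The bound for `‖f w‖` in terms of `r = ‖w‖`, valid on the unit disc when `‖f‖ ≤ 1`,
`‖Δ f‖ ≤ M` and `‖f 0‖ = a`. -/
def schwarzMajorant (M a r : ℝ) : ℝ :=
  4 / π * arctan r + M / 4 * ((1 - r ^ 2) + (1 - r ^ 2) / (1 + r ^ 2)) +
    (1 - r ^ 2) / (1 + r ^ 2) * a

theorem schwarzMajorant_one (M a : ℝ) : schwarzMajorant M a 1 = 1 := by
  simp [schwarzMajorant, pi_ne_zero]

theorem hasDerivAt_schwarzMajorant_one (M a : ℝ) :
    HasDerivAt (schwarzMajorant M a) (2 / π - a - 3 * M / 4) 1 := by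
  have hsq : HasDerivAt (fun r : ℝ ↦ 1 - r ^ 2) (-2) 1 := by
    simpa using (hasDerivAt_pow 2 (1 : ℝ)).const_sub 1
  have hsq' : HasDerivAt (fun r : ℝ ↦ 1 + r ^ 2) 2 1 := by
    simpa using (hasDerivAt_pow 2 (1 : ℝ)).const_add 1
  have hquot : HasDerivAt (fun r : ℝ ↦ (1 - r ^ 2) / (1 + r ^ 2)) (-1) 1 := by
    convert! hsq.div hsq' (by norm_num) using 1
    norm_num
  convert! (((hasDerivAt_arctan 1).const_mul (4 / π)).add
    ((hsq.add hquot).const_mul (M / 4))).add (hquot.mul_const a) using 1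
  ring

section Radial

variable {E : Type*} [NormedAddCommGroup E]

theorem eventually_mul_mem_ball_and_norm_eq {ζ : ℂ} (hζ : ζ ∈ sphere (0 : ℂ) 1) :
    ∀ᶠ r : ℝ in 𝓝[<] 1, (r : ℂ) * ζ ∈ ball 0 1 ∧ ‖(r : ℂ) * ζ‖ = r := by
  filter_upwards [Ioo_mem_nhdsLT zero_lt_one] with r hr
  have hnorm : ‖(r : ℂ) * ζ‖ = r := by
    rw [norm_mul, mem_sphere_zero_iff_norm.1 hζ, mul_one, Complex.norm_of_nonneg hr.1.le]
  exact ⟨mem_ball_zero_iff.2 (hnorm.trans_lt hr.2), hnorm⟩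

theorem norm_eq_of_tendsto_norm_radial {f : ℂ → E} {ζ : ℂ} {l : ℝ}
    (hf : ContinuousOn f (closedBall 0 1)) (hζ : ζ ∈ sphere (0 : ℂ) 1)
    (hlim : Tendsto (fun r : ℝ ↦ ‖f (r * ζ)‖) (𝓝[<] 1) (𝓝 l)) : ‖f ζ‖ = l := by
  have hradial : Tendsto (fun r : ℝ ↦ (r : ℂ) * ζ) (𝓝[<] 1) (𝓝[closedBall 0 1] ζ) := by
    refine tendsto_nhdsWithin_iff.2 ⟨tendsto_nhdsWithin_of_tendsto_nhds ?_, ?_⟩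
    · exact Continuous.tendsto' (by fun_prop) _ _ (by simp)
    · exact (eventually_mul_mem_ball_and_norm_eq hζ).mono fun r hr ↦ ball_subset_closedBall hr.1
  exact tendsto_nhds_unique
    ((hf.norm ζ (sphere_subset_closedBall hζ)).tendsto.comp hradial) hlim

variable [NormedSpace ℝ E]

theorem norm_le_schwarzMajorant {f : ℂ → E} {M : ℝ} {w : ℂ}
    (hf : ContDiffOn ℝ 2 f (ball 0 1)) (hfc : ContinuousOn f (closedBall 0 1))
    (hf₁ : ∀ z ∈ sphere (0 : ℂ) 1, ‖f z‖ ≤ 1) (hΔ : ∀ z ∈ ball (0 : ℂ) 1, ‖Δ f z‖ ≤ M)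
    (hw : w ∈ ball (0 : ℂ) 1) : ‖f w‖ ≤ schwarzMajorant M ‖f 0‖ ‖w‖ := by
  have hw₁ : ‖w‖ ^ 2 ≤ 1 := pow_le_one₀ (norm_nonneg w) (mem_ball_zero_iff.1 hw).le
  have hfactor : 0 ≤ (1 - ‖w‖ ^ 2) / (1 + ‖w‖ ^ 2) :=
    div_nonneg (sub_nonneg.2 hw₁) (by positivity)
  calc ‖f w‖ ≤ ‖f w - ((1 - ‖w‖ ^ 2) / (1 + ‖w‖ ^ 2)) • f 0‖ +
        ‖((1 - ‖w‖ ^ 2) / (1 + ‖w‖ ^ 2)) • f 0‖ := norm_le_norm_sub_add _ _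
    _ ≤ schwarzMajorant M ‖f 0‖ ‖w‖ :=
      add_le_add (norm_sub_smul_le_of_norm_laplacian_le hf hfc hf₁ hΔ hw)
        (norm_smul_of_nonneg hfactor _).le

theorem stmt2_general {f : ℂ → E} {M : ℝ} {ζ : ℂ}
    (hf : ContDiffOn ℝ 2 f (ball 0 1)) (hfc : ContinuousOn f (closedBall 0 1))
    (hΔ : ∀ z ∈ ball (0 : ℂ) 1, ‖Δ f z‖ ≤ M) (hf₁ : ∀ z ∈ ball (0 : ℂ) 1, ‖f z‖ ≤ 1)
    (hζ : ζ ∈ sphere (0 : ℂ) 1) (hfζ : ‖f ζ‖ = 1) :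
    ((2 / π - ‖f 0‖ - 3 * M / 4 : ℝ) : EReal) ≤
      liminf (fun r : ℝ ↦ ((‖f ζ - f (r * ζ)‖ / (1 - r) : ℝ) : EReal)) (𝓝[<] 1) := by
  have hsphere : ∀ z ∈ sphere (0 : ℂ) 1, ‖f z‖ ≤ 1 := fun z hz ↦ by
    have hcl : closure (ball (0 : ℂ) 1) = closedBall 0 1 := closure_ball 0 one_ne_zero
    exact le_on_closure hf₁ (hcl ▸ hfc.norm) continuousOn_const
      (hcl ▸ sphere_subset_closedBall hz)
  refine coe_le_liminf_div_sub_of_hasDerivWithinAt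
    (hasDerivAt_schwarzMajorant_one M ‖f 0‖).hasDerivWithinAt ?_
  filter_upwards [eventually_mul_mem_ball_and_norm_eq hζ] with r ⟨hr, hnorm⟩
  calc schwarzMajorant M ‖f 0‖ 1 - schwarzMajorant M ‖f 0‖ r ≤ ‖f ζ‖ - ‖f (r * ζ)‖ := by
        rw [schwarzMajorant_one, hfζ]
        gcongr
        simpa only [hnorm] using norm_le_schwarzMajorant hf hfc hsphere hΔ hr
    _ ≤ ‖f ζ - f (r * ζ)‖ := norm_sub_norm_le _ _

end Radial

end Schwarz

/-- Boundary Schwarz lemma for solutions of the Poisson equation (Theorem 1.3). -/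
theorem stmt2 (g f : ℂ → ℂ)
    (hg : ContinuousOn g (closedBall (0:ℂ) 1))
    (hgnorm : supD g < 8 / (3 * Real.pi))
    (hf2 : ContDiffOn ℝ 2 f (ball (0:ℂ) 1))
    (hfc : ContinuousOn f (closedBall (0:ℂ) 1))
    (hfg : ∀ z ∈ ball (0:ℂ) 1, lap f z = g z)
    (hfb : ∀ z ∈ ball (0:ℂ) 1, ‖f z‖ ≤ 1)
    (hf0 : f 0 = 0)
    (ζ : ℂ) (hζ : ζ ∈ sphere (0:ℂ) 1)
    (hlim : Filter.Tendsto (fun r : ℝ => ‖f ((r : ℂ) * ζ)‖)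
      (nhdsWithin 1 (Set.Iio 1)) (nhds 1)) :
    ((2 / Real.pi - 3 * supD g / 4 : ℝ) : EReal) ≤
      Filter.liminf (fun r : ℝ => ((‖f ζ - f ((r : ℂ) * ζ)‖ / (1 - r) : ℝ) : EReal))
        (nhdsWithin 1 (Set.Iio 1)) := by
  simpa [hf0] using stmt2_general hf2 hfc (fun _ ↦ norm_laplacian_le_supD hg hf2 hfg) hfb hζ
    (norm_eq_of_tendsto_norm_radial hfc hζ hlim)
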